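/- arXiv:2111.00371 — 2 statements merged into one kernel-verified Lean document; each statement's English description precedes it below -/
import Mathlib

section
/- Let (A, μ) be an associative algebra over a field K, and let r = r¹⊗r², s = s¹⊗s² ∈ A⊗A (summation understood) satisfy r₁₃r₁₂ − r₁₂r₂₃ + s₂₃r₁₃ = 0 and s₁₃r₁₂ − s₁₂s₂₃ + s₂₃s₁₃ = 0 in A⊗A⊗A, where r₁₂s₂₃ = r¹⊗r²s¹⊗s², r₁₃s₁₂ = r¹s¹⊗s²⊗r², r₂₃s₁₃ = s¹⊗r¹⊗r²s². Define R, S : A → A by R(a) = r¹ar² and S(a) = s¹as². Then (A, R, S) is a Rota-Baxter system, i.e., R(a)R(b) = R(R(a)b) + R(aS(b)) and S(a)S(b) = S(R(a)b) + S(aS(b)) for all a, b ∈ A. -/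
open TensorProduct

section Defs

variable {K A : Type*} [Field K] [NonUnitalRing A] [Module K A]
  [SMulCommClass K A A] [IsScalarTower K A A]

/-- `r₁₂s₂₃ = r¹ ⊗ r²s¹ ⊗ s²`, as a linear map on `(A⊗A)⊗(A⊗A)`. -/
noncomputable def m1223 :
    (A ⊗[K] A) ⊗[K] (A ⊗[K] A) →ₗ[K] A ⊗[K] (A ⊗[K] A) :=
  TensorProduct.map LinearMap.id (TensorProduct.map (LinearMap.mul' K A) LinearMap.id) ∘ₗ
    TensorProduct.map LinearMap.id (TensorProduct.assoc K A A A).symm.toLinearMap ∘ₗ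
    (TensorProduct.assoc K A A (A ⊗[K] A)).toLinearMap

/-- `r₁₃s₁₂ = r¹s¹ ⊗ s² ⊗ r²`. -/
noncomputable def m1312 :
    (A ⊗[K] A) ⊗[K] (A ⊗[K] A) →ₗ[K] A ⊗[K] (A ⊗[K] A) :=
  TensorProduct.map (LinearMap.mul' K A)
      ((TensorProduct.comm K A A).toLinearMap) ∘ₗ
    (TensorProduct.tensorTensorTensorComm K A A A A).toLinearMap

/-- `r₂₃s₁₃ = s¹ ⊗ r¹ ⊗ r²s²`. -/
noncomputable def m2313 :
    (A ⊗[K] A) ⊗[K] (A ⊗[K] A) →ₗ[K] A ⊗[K] (A ⊗[K] A) :=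
  (TensorProduct.assoc K A A A).toLinearMap ∘ₗ
    TensorProduct.map (TensorProduct.comm K A A).toLinearMap (LinearMap.mul' K A) ∘ₗ
    (TensorProduct.tensorTensorTensorComm K A A A A).toLinearMap

/-- The operator `a ↦ r¹ a r²` attached to `r ∈ A⊗A`. -/
noncomputable def rbOp (r : A ⊗[K] A) (a : A) : A :=
  LinearMap.mul' K A (TensorProduct.map LinearMap.id (LinearMap.mulLeft K a) r)

end Defs

section TwoSided

variable {R A : Type*} [CommSemiring R] [NonUnitalSemiring A] [Module R A]
  [SMulCommClass R A A] [IsScalarTower R A A]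

variable (R A) in
/-- The two-sided multiplication `x ⊗ y ↦ (a ↦ x a y)`, a version of `rbOp` that is linear both in
the tensor and in the argument. -/
noncomputable def twoSidedMul : A ⊗[R] A →ₗ[R] Module.End R A :=
  LinearMap.mul' R (Module.End R A) ∘ₗ
    TensorProduct.map (LinearMap.mul R A) (LinearMap.mul R A).flip

@[simp]
theorem twoSidedMul_tmul (x y a : A) : twoSidedMul R A (x ⊗ₜ[R] y) a = x * (a * y) := rfl

variable (R) in
/-- The interleaved product `x ⊗ y ⊗ z ↦ x a y b z`. It sends each of the three terms of an
associative Yang-Baxter equation to one term of the corresponding Rota-Baxter equation at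
`(a, b)`. -/
noncomputable def interleavedMul (a b : A) : A ⊗[R] (A ⊗[R] A) →ₗ[R] A :=
  LinearMap.mul' R A ∘ₗ
    TensorProduct.map LinearMap.id (LinearMap.mulLeft R a ∘ₗ LinearMap.mul' R A ∘ₗ
      TensorProduct.map LinearMap.id (LinearMap.mulLeft R b))

@[simp]
theorem interleavedMul_tmul (a b x y z : A) :
    interleavedMul R a b (x ⊗ₜ[R] (y ⊗ₜ[R] z)) = x * (a * (y * (b * z))) := rfl

end TwoSided

section YangBaxter

variable {K A : Type*} [Field K] [NonUnitalRing A] [Module K A]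
  [SMulCommClass K A A] [IsScalarTower K A A]

theorem m1223_tmul (x y u v : A) :
    m1223 ((x ⊗ₜ[K] y) ⊗ₜ[K] (u ⊗ₜ[K] v)) = x ⊗ₜ[K] ((y * u) ⊗ₜ[K] v) := rfl

theorem m1312_tmul (x y u v : A) :
    m1312 ((x ⊗ₜ[K] y) ⊗ₜ[K] (u ⊗ₜ[K] v)) = (x * u) ⊗ₜ[K] (v ⊗ₜ[K] y) := rfl

theorem m2313_tmul (x y u v : A) :
    m2313 ((x ⊗ₜ[K] y) ⊗ₜ[K] (u ⊗ₜ[K] v)) = u ⊗ₜ[K] (x ⊗ₜ[K] (y * v)) := rfl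

theorem rbOp_eq_twoSidedMul (r : A ⊗[K] A) : rbOp r = twoSidedMul K A r := by
  funext a
  induction r with
  | zero => simp [rbOp]
  | tmul x y => rfl
  | add r₁ r₂ h₁ h₂ => simpa [rbOp] using congrArg₂ (· + ·) h₁ h₂

theorem isLinearMap_rbOp (r : A ⊗[K] A) : IsLinearMap K (rbOp r) :=
  rbOp_eq_twoSidedMul r ▸ (twoSidedMul K A r).isLinear

theorem interleavedMul_m1223 (r s : A ⊗[K] A) (a b : A) :
    interleavedMul K a b (m1223 (r ⊗ₜ[K] s)) = rbOp r a * rbOp s b := by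
  simp only [rbOp_eq_twoSidedMul]
  induction r with
  | zero => simp
  | add r₁ r₂ h₁ h₂ => simp [add_tmul, add_mul, h₁, h₂]
  | tmul x y =>
    induction s with
    | zero => simp
    | add s₁ s₂ h₁ h₂ => simp [tmul_add, mul_add, h₁, h₂]
    | tmul u v => simp [m1223_tmul, mul_assoc]

theorem interleavedMul_m1312 (r s : A ⊗[K] A) (a b : A) :
    interleavedMul K a b (m1312 (r ⊗ₜ[K] s)) = rbOp r (rbOp s a * b) := by
  simp only [rbOp_eq_twoSidedMul]
  induction r with
  | zero => simp
  | add r₁ r₂ h₁ h₂ => simp [add_tmul, h₁, h₂]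
  | tmul x y =>
    induction s with
    | zero => simp
    | add s₁ s₂ h₁ h₂ => simp only [tmul_add, map_add, h₁, h₂, LinearMap.add_apply, add_mul]
    | tmul u v => simp [m1312_tmul, mul_assoc]

theorem interleavedMul_m2313 (r s : A ⊗[K] A) (a b : A) :
    interleavedMul K a b (m2313 (r ⊗ₜ[K] s)) = rbOp s (a * rbOp r b) := by
  simp only [rbOp_eq_twoSidedMul]
  induction s with
  | zero => simp
  | add s₁ s₂ h₁ h₂ => simp [tmul_add, h₁, h₂]
  | tmul u v =>
    induction r with
    | zero => simp
    | add r₁ r₂ h₁ h₂ => simp only [add_tmul, map_add, h₁, h₂, LinearMap.add_apply, mul_add]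
    | tmul x y => simp [m2313_tmul, mul_assoc]

theorem rbOp_mul_rbOp_of_yangBaxter {r s t : A ⊗[K] A}
    (h : m1312 (t ⊗ₜ[K] r) - m1223 (t ⊗ₜ[K] t) + m2313 (s ⊗ₜ[K] t) = 0) (a b : A) :
    rbOp t a * rbOp t b = rbOp t (rbOp r a * b) + rbOp t (a * rbOp s b) := by
  have h_eq : m1223 (t ⊗ₜ[K] t) = m1312 (t ⊗ₜ[K] r) + m2313 (s ⊗ₜ[K] t) := by
    rwa [sub_add_eq_add_sub, sub_eq_zero, eq_comm] at h
  calc rbOp t a * rbOp t b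
      = interleavedMul K a b (m1223 (t ⊗ₜ[K] t)) := (interleavedMul_m1223 t t a b).symm
    _ = interleavedMul K a b (m1312 (t ⊗ₜ[K] r)) + interleavedMul K a b (m2313 (s ⊗ₜ[K] t)) := by
      rw [h_eq, map_add]
    _ = rbOp t (rbOp r a * b) + rbOp t (a * rbOp s b) := by
      rw [interleavedMul_m1312, interleavedMul_m2313]

end YangBaxter

/-- Corollary 2.8, Brzeziński's Proposition 3.4: an associative
Yang-Baxter pair `(r, s)` of weight `(0, 0)` in an associative algebra `(A, μ)`
yields a Rota-Baxter system `(A, R, S)` with `R(a) = r¹ar²` and `S(a) = s¹as²`. -/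
theorem stmt2 {K A : Type*} [Field K] [NonUnitalRing A] [Module K A]
    [SMulCommClass K A A] [IsScalarTower K A A]
    (r s : A ⊗[K] A)
    -- r₁₃r₁₂ − r₁₂r₂₃ + s₂₃r₁₃ = 0
    (hYB1 : m1312 (r ⊗ₜ[K] r) - m1223 (r ⊗ₜ[K] r) + m2313 (s ⊗ₜ[K] r) = 0)
    -- s₁₃r₁₂ − s₁₂s₂₃ + s₂₃s₁₃ = 0
    (hYB2 : m1312 (s ⊗ₜ[K] r) - m1223 (s ⊗ₜ[K] s) + m2313 (s ⊗ₜ[K] s) = 0) :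
    -- conclusion: (A, R, S) is a Rota-Baxter system
    IsLinearMap K (rbOp r) ∧ IsLinearMap K (rbOp s) ∧
    (∀ a b, rbOp r a * rbOp r b = rbOp r (rbOp r a * b) + rbOp r (a * rbOp s b)) ∧
    (∀ a b, rbOp s a * rbOp s b = rbOp s (rbOp r a * b) + rbOp s (a * rbOp s b)) :=
  ⟨isLinearMap_rbOp r, isLinearMap_rbOp s,
    rbOp_mul_rbOp_of_yangBaxter hYB1, rbOp_mul_rbOp_of_yangBaxter hYB2⟩
end

section
/- Let (A, R) be a Rota-Baxter algebra of weight λ over a field K, and let (M, R, T) be a Rota-Baxter paired left A-module of weight λ with underlying action ▷. Define a⋆b = R(a)b + λab − b·R(a) and a▷⋆m = R(a)▷m + a▷T(m) + λ·a▷m. Then (A, ⋆) is a left pre-Lie algebra and (M, ▷⋆) is a left pre-Lie module over (A, ⋆), i.e., a▷⋆(b▷⋆m) − (a⋆b)▷⋆m = b▷⋆(a▷⋆m) − (b⋆a)▷⋆m for all a, b ∈ A and m ∈ M. -/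
/-- `a ⋆ b = R(a)b + λab − b·R(a)`. -/
def starOp {K A : Type*} [Field K] [NonUnitalRing A] [Module K A]
    [SMulCommClass K A A] [IsScalarTower K A A]
    (R : A →ₗ[K] A) (lam : K) (a b : A) : A :=
  R a * b + lam • (a * b) - b * R a

/-- `a ▷⋆ m = R(a)▷m + a▷T(m) + λ·a▷m`. -/
def actStar {K A M : Type*} [Field K] [NonUnitalRing A] [Module K A]
    [SMulCommClass K A A] [IsScalarTower K A A] [AddCommGroup M] [Module K M]
    (act : A →ₗ[K] M →ₗ[K] M) (R : A →ₗ[K] A) (T : M →ₗ[K] M) (lam : K)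
    (a : A) (m : M) : M :=
  act (R a) m + act a (T m) + lam • act a m

/-!
The product `a ∘ b = R(a)b + aR(b) + λab` has the same commutator as `⋆`, so both pre-Lie identities
say that the operators `a ⋆ ·` and `a ▷⋆ ·` turn the commutator of `∘` into the commutator of
operators. For `▷⋆` this holds because `▷⋆` is an action of the product `∘`, thanks to
`R(a ∘ b) = R(a)R(b)` and `T(a ▷⋆ m) = R(a) ▷ T(m)`. For `⋆` it holds because `R` and `R + λ` both
turn `∘` into the product of `A`: in `a ⋆ b = (R + λ)(a)b - bR(a)`, the first term is a left action
of `∘` and the second a right action, and the two commute.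
-/

section PreLie

variable {K A M : Type*} [CommSemiring K] [AddCommGroup A] [Module K A]
  [AddCommGroup M] [Module K M]

/-- The identity of a left pre-Lie module with action `ρ` over a product `μ`. The product itself is
left pre-Lie exactly when `IsLeftPreLieModule μ μ`; this is not part of the predicate. -/
def IsLeftPreLieModule (μ : A →ₗ[K] A →ₗ[K] A) (ρ : A →ₗ[K] M →ₗ[K] M) : Prop :=
  ∀ a b m, ρ a (ρ b m) - ρ (μ a b) m = ρ b (ρ a m) - ρ (μ b a) m

theorem isLeftPreLieModule_iff_map_sub_eq_lie {μ : A →ₗ[K] A →ₗ[K] A}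
    {ρ : A →ₗ[K] Module.End K M} :
    IsLeftPreLieModule μ ρ ↔ ∀ a b, ρ (μ a b - μ b a) = ⁅ρ a, ρ b⁆ := by
  simp only [IsLeftPreLieModule, LinearMap.ext_iff, map_sub, LinearMap.sub_apply,
    Ring.lie_def, Module.End.mul_apply, sub_eq_sub_iff_sub_eq_sub, eq_comm]

end PreLie

section RotaBaxter

variable {K A M : Type*} [CommSemiring K] [NonUnitalNonAssocSemiring A] [Module K A]
  [AddCommMonoid M] [Module K M]

/-- `R` is a Rota-Baxter operator of weight `lam` on the algebra `A`. -/
def IsRotaBaxter (R : A →ₗ[K] A) (lam : K) : Prop :=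
  ∀ a b, R a * R b = R (R a * b) + R (a * R b) + lam • R (a * b)

/-- The double product `a ∘ b = R(a)b + aR(b) + λab` of a Rota-Baxter algebra. -/
def doubleMul (R : A →ₗ[K] A) (lam : K) (a b : A) : A :=
  R a * b + a * R b + lam • (a * b)

theorem IsRotaBaxter.map_doubleMul {R : A →ₗ[K] A} {lam : K} (h : IsRotaBaxter R lam)
    (a b : A) : R (doubleMul R lam a b) = R a * R b := by
  rw [doubleMul, map_add, map_add, map_smul, h]

theorem IsRotaBaxter.map_doubleMul_add_smul [SMulCommClass K A A] [IsScalarTower K A A]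
    {R : A →ₗ[K] A} {lam : K} (h : IsRotaBaxter R lam) (a b : A) :
    R (doubleMul R lam a b) + lam • doubleMul R lam a b =
      (R a + lam • a) * (R b + lam • b) := by
  rw [h.map_doubleMul, doubleMul]
  simp only [mul_add, add_mul, smul_add, mul_smul_comm, smul_mul_assoc]
  abel

/-- `T` makes the action `act` a Rota-Baxter paired module of weight `lam` over `(A, R)`. -/
def IsRotaBaxterPaired (act : A →ₗ[K] M →ₗ[K] M) (R : A →ₗ[K] A) (T : M →ₗ[K] M)
    (lam : K) : Prop :=
  ∀ a m, act (R a) (T m) = T (act (R a) m) + T (act a (T m)) + lam • T (act a m)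

/-- The action `a ▷⋆ m = R(a)▷m + a▷T(m) + λ·a▷m`, as a bilinear map. -/
def preLieAct (act : A →ₗ[K] M →ₗ[K] M) (R : A →ₗ[K] A) (T : M →ₗ[K] M) (lam : K) :
    A →ₗ[K] M →ₗ[K] M :=
  act ∘ₗ R + act.compl₂ T + lam • act

theorem preLieAct_apply (act : A →ₗ[K] M →ₗ[K] M) (R : A →ₗ[K] A) (T : M →ₗ[K] M) (lam : K)
    (a : A) (m : M) :
    preLieAct act R T lam a m = act (R a) m + act a (T m) + lam • act a m :=
  rfl

theorem IsRotaBaxterPaired.map_preLieAct {act : A →ₗ[K] M →ₗ[K] M} {R : A →ₗ[K] A}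
    {T : M →ₗ[K] M} {lam : K} (h : IsRotaBaxterPaired act R T lam) (a : A) (m : M) :
    T (preLieAct act R T lam a m) = act (R a) (T m) := by
  rw [preLieAct_apply, map_add, map_add, map_smul, h]

theorem IsRotaBaxterPaired.preLieAct_doubleMul {act : A →ₗ[K] M →ₗ[K] M} {R : A →ₗ[K] A}
    {T : M →ₗ[K] M} {lam : K} (h : IsRotaBaxterPaired act R T lam) (hR : IsRotaBaxter R lam)
    (hact : ∀ a b m, act (a * b) m = act a (act b m)) (a b : A) (m : M) :
    preLieAct act R T lam (doubleMul R lam a b) m =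
      preLieAct act R T lam a (preLieAct act R T lam b m) := by
  have act_doubleMul (n : M) : act (doubleMul R lam a b) n =
      act (R a) (act b n) + act a (act (R b) n) + lam • act a (act b n) := by
    simp only [doubleMul, map_add, map_smul, LinearMap.add_apply, LinearMap.smul_apply, hact]
  rw [preLieAct_apply, hR.map_doubleMul, hact, act_doubleMul, act_doubleMul,
    preLieAct_apply act R T lam a, h.map_preLieAct, preLieAct_apply]
  simp only [map_add, map_smul, smul_add]
  abel

end RotaBaxter

section PreLieMul

variable {K A : Type*} [CommSemiring K] [NonUnitalNonAssocRing A] [Module K A]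
  [SMulCommClass K A A] [IsScalarTower K A A]

/-- The product `a ⋆ b = R(a)b + λab - bR(a)`, as a bilinear map. -/
def preLieMul (R : A →ₗ[K] A) (lam : K) : A →ₗ[K] A →ₗ[K] A :=
  LinearMap.mul K A ∘ₗ R + lam • LinearMap.mul K A - (LinearMap.mul K A).flip ∘ₗ R

theorem preLieMul_apply (R : A →ₗ[K] A) (lam : K) (a b : A) :
    preLieMul R lam a b = R a * b + lam • (a * b) - b * R a :=
  rfl

theorem preLieMul_eq_mulLeft_sub_mulRight (R : A →ₗ[K] A) (lam : K) (a : A) :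
    preLieMul R lam a = LinearMap.mulLeft K (R a + lam • a) - LinearMap.mulRight K (R a) := by
  ext b
  simp only [preLieMul_apply, LinearMap.sub_apply, LinearMap.mulLeft_apply,
    LinearMap.mulRight_apply, add_mul, smul_mul_assoc]

theorem preLieMul_sub_preLieMul_swap (R : A →ₗ[K] A) (lam : K) (a b : A) :
    preLieMul R lam a b - preLieMul R lam b a = doubleMul R lam a b - doubleMul R lam b a := by
  simp only [preLieMul_apply, doubleMul]
  abel

theorem IsRotaBaxterPaired.isLeftPreLieModule_preLieAct {M : Type*} [AddCommGroup M] [Module K M]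
    {act : A →ₗ[K] M →ₗ[K] M} {R : A →ₗ[K] A} {T : M →ₗ[K] M} {lam : K}
    (h : IsRotaBaxterPaired act R T lam) (hR : IsRotaBaxter R lam)
    (hact : ∀ a b m, act (a * b) m = act a (act b m)) :
    IsLeftPreLieModule (preLieMul R lam) (preLieAct act R T lam) :=
  isLeftPreLieModule_iff_map_sub_eq_lie.2 fun a b ↦ by
    ext m
    rw [preLieMul_sub_preLieMul_swap, map_sub, LinearMap.sub_apply,
      h.preLieAct_doubleMul hR hact, h.preLieAct_doubleMul hR hact, Ring.lie_def,
      LinearMap.sub_apply, Module.End.mul_apply, Module.End.mul_apply]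

end PreLieMul

theorem lie_sub_sub_of_commute {E : Type*} [NonUnitalNonAssocRing E] {x y x' y' : E}
    (hxy' : Commute x y') (hx'y : Commute x' y) :
    ⁅x - y, x' - y'⁆ = ⁅x, x'⁆ + ⁅y, y'⁆ := by
  simp only [Ring.lie_def, mul_sub, sub_mul, hxy'.eq, hx'y.eq]
  abel

section Associative

variable {K A : Type*} [CommSemiring K] [NonUnitalRing A] [Module K A]
  [SMulCommClass K A A] [IsScalarTower K A A]

theorem IsRotaBaxter.preLieMul_doubleMul_sub {R : A →ₗ[K] A} {lam : K}
    (h : IsRotaBaxter R lam) (a b : A) :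
    preLieMul R lam (doubleMul R lam a b - doubleMul R lam b a) =
      ⁅(preLieMul R lam a : Module.End K A), preLieMul R lam b⁆ := by
  have preLieMul_doubleMul (x y : A) : preLieMul R lam (doubleMul R lam x y) =
      LinearMap.mulLeft K (R x + lam • x) * LinearMap.mulLeft K (R y + lam • y) -
        LinearMap.mulRight K (R y) * LinearMap.mulRight K (R x) := by
    rw [preLieMul_eq_mulLeft_sub_mulRight, h.map_doubleMul_add_smul, h.map_doubleMul,
      LinearMap.mulLeft_mul, LinearMap.mulRight_mul, Module.End.mul_eq_comp,
      Module.End.mul_eq_comp]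
  rw [map_sub, preLieMul_doubleMul, preLieMul_doubleMul, preLieMul_eq_mulLeft_sub_mulRight,
    preLieMul_eq_mulLeft_sub_mulRight,
    lie_sub_sub_of_commute (LinearMap.commute_mulLeft_right ..)
      (LinearMap.commute_mulLeft_right ..),
    Ring.lie_def, Ring.lie_def]
  abel

theorem IsRotaBaxter.isLeftPreLieModule_preLieMul {R : A →ₗ[K] A} {lam : K}
    (h : IsRotaBaxter R lam) : IsLeftPreLieModule (preLieMul R lam) (preLieMul R lam) :=
  isLeftPreLieModule_iff_map_sub_eq_lie.2 fun a b ↦ by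
    rw [preLieMul_sub_preLieMul_swap, h.preLieMul_doubleMul_sub]

theorem stmt18_general {M : Type*} [AddCommGroup M] [Module K M]
    (R : A →ₗ[K] A) (lam : K) (act : A →ₗ[K] M →ₗ[K] M) (T : M →ₗ[K] M)
    (hRB : IsRotaBaxter R lam) (hMact : ∀ a b m, act (a * b) m = act a (act b m))
    (hpair : IsRotaBaxterPaired act R T lam) :
    IsLeftPreLieModule (preLieMul R lam) (preLieMul R lam) ∧
      IsLeftPreLieModule (preLieMul R lam) (preLieAct act R T lam) :=
  ⟨hRB.isLeftPreLieModule_preLieMul, hpair.isLeftPreLieModule_preLieAct hRB hMact⟩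

end Associative

/-- Corollary 3.12: if `(A, R)` is a Rota-Baxter algebra of
weight `λ` and `(M, R, T)` a Rota-Baxter paired left `A`-module of weight `λ`,
then `a ⋆ b = R(a)b + λab − bR(a)` makes `(A, ⋆)` a left pre-Lie algebra and
`a▷⋆m = R(a)▷m + a▷T(m) + λa▷m` makes `(M, ▷⋆)` a left pre-Lie module over it. -/
theorem stmt18 {K A M : Type*} [Field K] [NonUnitalRing A] [Module K A]
    [SMulCommClass K A A] [IsScalarTower K A A] [AddCommGroup M] [Module K M]
    (R : A →ₗ[K] A) (lam : K) (act : A →ₗ[K] M →ₗ[K] M) (T : M →ₗ[K] M)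
    -- Rota-Baxter operator of weight λ
    (hRB : ∀ a b, R a * R b = R (R a * b) + R (a * R b) + lam • R (a * b))
    -- M is a left A-module
    (hMact : ∀ a b m, act (a * b) m = act a (act b m))
    -- Rota-Baxter paired module structure of weight λ
    (hpair : ∀ a m, act (R a) (T m) =
      T (act (R a) m) + T (act a (T m)) + lam • T (act a m)) :
    (∀ a b c, starOp R lam a (starOp R lam b c) - starOp R lam (starOp R lam a b) c =
      starOp R lam b (starOp R lam a c) - starOp R lam (starOp R lam b a) c) ∧
    (∀ a b m,
      actStar act R T lam a (actStar act R T lam b m) -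
        actStar act R T lam (starOp R lam a b) m =
      actStar act R T lam b (actStar act R T lam a m) -
        actStar act R T lam (starOp R lam b a) m) :=
  stmt18_general R lam act T hRB hMact hpair
end
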